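/- Let ν be the unique invariant σ-finite measure of the chain Y, normalized by F_ν(x₀) = 1. Then for every δ' ∈ (0, δ) one has F_ν(x) = O(e^{δ' x}) as x → −∞. -/

import Mathlib

open MeasureTheory ProbabilityTheory Real Filter Set
open scoped ENNReal

noncomputable def hkfun (k x : ℝ) : ℝ :=
  Real.log ((Real.exp (-k) + Real.exp x) / (1 + Real.exp (x - k)))

noncomputable def hY (y : ℝ) : ℝ := y + Real.log (1 + Real.exp (-y))

/-- A σ-finite measure ν is invariant for the chain Y_{n+1} = z_{n+1} + hY (Y_n),
where the increments have density ζ. -/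
def IsInvariantY (ζ : ℝ → ℝ) (ν : Measure ℝ) : Prop :=
  ∀ g : ℝ → ℝ≥0∞, Measurable g →
    ∫⁻ z, g z ∂ν = ∫⁻ y, ∫⁻ z, g (z + hY y) * ENNReal.ofReal (ζ z) ∂volume ∂ν

/-!
The exponential `φ = e^{-δ h}` is a Lyapunov function for the chain `Yₙ₊₁ = zₙ₊₁ + h (Yₙ)`. Since
`h y = y + o(1)` at `+∞`, Fatou's lemma shows that the ratio of `E[φ (Y₁) | Y₀ = y]` to `φ y` has
lower limit at least `E[e^{-δ z}]` as `y → +∞`, and `E[e^{-δ z}]` exceeds `1` by strict convexity.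
Integrating the resulting inequality `(1 + c) φ ≤ E[φ (Y₁) | Y₀ = ·]` on `[K, ∞)` against the
invariant measure `ν` bounds `∫ φ dν` by a multiple of its finite part over `(-∞, K)`. One more step
of the chain gives `ν (-∞, x] = ∫ P(z ≤ x - h y) ν(dy) = O(e^{δ x} ∫ φ dν)`, which is the claim with
the rate `δ` itself.
-/

open scoped NNReal Topology Asymptotics

section Drift

variable {α : Type*} [MeasurableSpace α] {κ : Kernel α α} {ν : Measure α} {φ : α → ℝ≥0∞}
  {s : Set α} {c : ℝ≥0}

lemma lintegral_eq_lintegral_lintegral_of_invariant (hν : κ.Invariant ν) (hφ : Measurable φ) :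
    ∫⁻ x, φ x ∂ν = ∫⁻ x, ∫⁻ y, φ y ∂κ x ∂ν := by
  conv_lhs => rw [← hν.def]
  exact Measure.lintegral_bind κ.aemeasurable hφ.aemeasurable

lemma mul_lintegral_compl_le_of_drift (hν : κ.Invariant ν) (hφ : Measurable φ)
    (hs : MeasurableSet s) (hfin : ∫⁻ x, φ x ∂ν ≠ ∞)
    (hdrift : ∀ x ∈ sᶜ, (1 + c) * φ x ≤ ∫⁻ y, φ y ∂κ x) :
    c * ∫⁻ x in sᶜ, φ x ∂ν ≤ ∫⁻ x in s, φ x ∂ν := by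
  have hcompl : ∫⁻ x in sᶜ, φ x ∂ν ≠ ∞ := ne_top_of_le_ne_top hfin (setLIntegral_le_lintegral _ _)
  refine (ENNReal.add_le_add_iff_right hcompl).1 ?_
  calc c * ∫⁻ x in sᶜ, φ x ∂ν + ∫⁻ x in sᶜ, φ x ∂ν
      = ∫⁻ x in sᶜ, (1 + c) * φ x ∂ν := by rw [lintegral_const_mul _ hφ]; ring
    _ ≤ ∫⁻ x in sᶜ, ∫⁻ y, φ y ∂κ x ∂ν := setLIntegral_mono' hs.compl hdrift
    _ ≤ ∫⁻ x, ∫⁻ y, φ y ∂κ x ∂ν := setLIntegral_le_lintegral _ _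
    _ = ∫⁻ x in s, φ x ∂ν + ∫⁻ x in sᶜ, φ x ∂ν := by
      rw [← lintegral_eq_lintegral_lintegral_of_invariant hν hφ, lintegral_add_compl _ hs]

lemma drift_tsub_const [IsMarkovKernel κ] {x : α}
    (hdrift : (1 + c) * φ x ≤ ∫⁻ y, φ y ∂κ x) (ε : ℝ≥0∞) :
    (1 + c) * (φ x - ε) ≤ ∫⁻ y, (φ y - ε) ∂κ x := by
  calc (1 + c) * (φ x - ε) = (1 + c) * φ x - (1 + c) * ε :=
        ENNReal.mul_sub fun _ _ => by finiteness
    _ ≤ (∫⁻ y, φ y ∂κ x) - ε := tsub_le_tsub hdrift (le_mul_of_one_le_left' le_self_add)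
    _ = (∫⁻ y, φ y ∂κ x) - ∫⁻ _, ε ∂κ x := by simp
    _ ≤ ∫⁻ y, (φ y - ε) ∂κ x := lintegral_sub_le _ _ measurable_const

lemma tendsto_lintegral_tsub_inv_natCast (hφ : Measurable φ) :
    Tendsto (fun n : ℕ => ∫⁻ x, (φ x - (n : ℝ≥0∞)⁻¹) ∂ν) atTop (𝓝 (∫⁻ x, φ x ∂ν)) := by
  refine lintegral_tendsto_of_tendsto_of_monotone (fun n => by fun_prop)
    (Eventually.of_forall fun x n k hnk => ?_) (Eventually.of_forall fun x => ?_)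
  · exact tsub_le_tsub_left (ENNReal.inv_le_inv.2 (by exact_mod_cast hnk)) _
  · simpa using ENNReal.Tendsto.sub tendsto_const_nhds ENNReal.tendsto_inv_nat_nhds_zero
      (Or.inr ENNReal.zero_ne_top)

-- The previous estimate presupposes `∫ φ dν < ∞`. The truncations `φ - ε` have finite integral and
-- inherit the drift condition, and the bound they give is uniform in `ε`.
theorem lintegral_ne_top_of_drift [IsMarkovKernel κ] (hν : κ.Invariant ν) (hφ : Measurable φ)
    (hs : MeasurableSet s) (hφs : ∫⁻ x in s, φ x ∂ν ≠ ∞)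
    (htrunc : ∀ ε ≠ 0, ∫⁻ x, (φ x - ε) ∂ν ≠ ∞) (hc : c ≠ 0)
    (hdrift : ∀ x ∈ sᶜ, (1 + c) * φ x ≤ ∫⁻ y, φ y ∂κ x) :
    ∫⁻ x, φ x ∂ν ≠ ∞ := by
  have hbound (n : ℕ) : ∫⁻ x in sᶜ, (φ x - (n : ℝ≥0∞)⁻¹) ∂ν ≤ (∫⁻ x in s, φ x ∂ν) / c := by
    rw [ENNReal.le_div_iff_mul_le (by simp [hc]) (by simp), mul_comm]
    calc c * ∫⁻ x in sᶜ, (φ x - (n : ℝ≥0∞)⁻¹) ∂ν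
        ≤ ∫⁻ x in s, (φ x - (n : ℝ≥0∞)⁻¹) ∂ν :=
          mul_lintegral_compl_le_of_drift hν (hφ.sub_const _) hs (htrunc _ (by simp))
            fun x hx => drift_tsub_const (hdrift x hx) _
      _ ≤ ∫⁻ x in s, φ x ∂ν := lintegral_mono fun x => tsub_le_self
  have hcompl : ∫⁻ x in sᶜ, φ x ∂ν ≤ (∫⁻ x in s, φ x ∂ν) / c :=
    le_of_tendsto' (tendsto_lintegral_tsub_inv_natCast hφ) hbound
  rw [← lintegral_add_compl φ hs]
  exact ENNReal.add_ne_top.2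
    ⟨hφs, ne_top_of_le_ne_top (ENNReal.div_ne_top hφs (by simpa using hc)) hcompl⟩

end Drift

section Increments

variable {m : Measure ℝ} {δ : ℝ}

lemma one_lt_integral_exp_neg_mul [IsProbabilityMeasure m] (hint : Integrable (fun z => z) m)
    (hmean : ∫ z, z ∂m ≤ 0) (hne : m {0}ᶜ ≠ 0) (hδ : 0 < δ)
    (hexp : Integrable (fun z => exp (-δ * z)) m) :
    1 < ∫ z, exp (-δ * z) ∂m := by
  have haffine : Integrable (fun z => 1 - δ * z) m :=
    (integrable_const 1).sub (hint.const_mul δ)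
  have hsupport : {0}ᶜ ⊆ Function.support fun z => exp (-δ * z) - (1 - δ * z) := fun z hz => by
    have := add_one_lt_exp (mul_ne_zero (neg_ne_zero.2 hδ.ne') hz)
    exact (by linarith : 0 < exp (-δ * z) - (1 - δ * z)).ne'
  have hnonneg : ∀ z, 0 ≤ exp (-δ * z) - (1 - δ * z) := fun z => by
    linarith [add_one_le_exp (-δ * z)]
  have hpos : 0 < ∫ z, (exp (-δ * z) - (1 - δ * z)) ∂m :=
    (integral_pos_iff_support_of_nonneg hnonneg (hexp.sub haffine)).2
      ((pos_iff_ne_zero.2 hne).trans_le (measure_mono hsupport))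
  have hsplit : ∫ z, (exp (-δ * z) - (1 - δ * z)) ∂m
      = ∫ z, exp (-δ * z) ∂m - (1 - δ * ∫ z, z ∂m) := by
    rw [integral_sub hexp haffine, integral_sub (integrable_const 1) (hint.const_mul δ),
      integral_const_mul, integral_const, probReal_univ, one_smul]
  linarith [mul_nonpos_of_nonneg_of_nonpos hδ.le hmean]

lemma one_lt_lintegral_exp_neg_mul [IsProbabilityMeasure m] (hint : Integrable (fun z => z) m)
    (hmean : ∫ z, z ∂m ≤ 0) (hne : m {0}ᶜ ≠ 0) (hδ : 0 < δ) :
    1 < ∫⁻ z, ENNReal.ofReal (exp (-δ * z)) ∂m := by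
  have hnonneg : 0 ≤ᵐ[m] fun z => exp (-δ * z) := Eventually.of_forall fun z => (exp_pos _).le
  by_cases hexp : Integrable (fun z => exp (-δ * z)) m
  · rw [← ofReal_integral_eq_lintegral_ofReal hexp hnonneg, ENNReal.one_lt_ofReal]
    exact one_lt_integral_exp_neg_mul hint hmean hne hδ hexp
  · rw [not_ne_iff.1 (mt (lintegral_ofReal_ne_top_iff_integrable (by fun_prop) hnonneg).1 hexp)]
    exact ENNReal.one_lt_top

lemma integrable_id_of_exp_tail {C : ℝ} (hδ : 0 < δ)
    (htail : ∀ x : ℝ, 0 ≤ x → m {y | x < |y|} ≤ ENNReal.ofReal (C * exp (-δ * x))) :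
    Integrable (fun z => z) m := by
  refine ⟨by fun_prop, ?_⟩
  rw [hasFiniteIntegral_iff_norm,
    lintegral_eq_lintegral_meas_lt m (Eventually.of_forall norm_nonneg) (by fun_prop)]
  calc ∫⁻ t in Ioi 0, m {z | t < |z|}
      ≤ ∫⁻ t in Ioi 0, ENNReal.ofReal (C * exp (-δ * t)) :=
        setLIntegral_mono' measurableSet_Ioi fun t ht => htail t (mem_Ioi.1 ht).le
    _ < ∞ := ((exp_neg_integrableOn_Ioi 0 hδ).const_mul C).lintegral_lt_top

end Increments

section PerturbedWalk

/-- Transition kernel of the chain `Yₙ₊₁ = zₙ₊₁ + h (Yₙ)` with IID increments `zₙ` of law `m`.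
It is the zero kernel if `h` is not measurable. -/
noncomputable def perturbedWalk (m : Measure ℝ) (h : ℝ → ℝ) : Kernel ℝ ℝ :=
  (Kernel.id ×ₖ Kernel.const ℝ m).map fun p => p.2 + h p.1

/-- The Lyapunov function `e^{-δ h}` of the chain `Yₙ₊₁ = zₙ₊₁ + h (Yₙ)`, as an extended nonnegative
function so that its integrals are always meaningful. -/
noncomputable def expLyapunov (δ : ℝ) (h : ℝ → ℝ) (y : ℝ) : ℝ≥0∞ :=
  ENNReal.ofReal (exp (-δ * h y))

variable {m ν : Measure ℝ} {h : ℝ → ℝ} {δ : ℝ}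

lemma isMarkovKernel_perturbedWalk [IsProbabilityMeasure m] (hh : Measurable h) :
    IsMarkovKernel (perturbedWalk m h) :=
  Kernel.IsMarkovKernel.map _ (by fun_prop)

lemma lintegral_perturbedWalk [SFinite m] (hh : Measurable h) {g : ℝ → ℝ≥0∞} (hg : Measurable g)
    (y : ℝ) : ∫⁻ z, g z ∂perturbedWalk m h y = ∫⁻ z, g (z + h y) ∂m := by
  rw [perturbedWalk, Kernel.lintegral_map _ (by fun_prop) _ hg,
    Kernel.lintegral_id_prod (by fun_prop), Kernel.const_apply]

lemma perturbedWalk_apply_Iic [SFinite m] (hh : Measurable h) (x y : ℝ) :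
    perturbedWalk m h y (Iic x) = m (Iic (x - h y)) := by
  rw [← lintegral_indicator_one measurableSet_Iic, lintegral_perturbedWalk hh
    (measurable_one.indicator measurableSet_Iic), ← lintegral_indicator_one measurableSet_Iic]
  simp only [indicator, mem_Iic, le_sub_iff_add_le, Pi.one_apply]

@[fun_prop]
lemma measurable_expLyapunov (hh : Measurable h) : Measurable (expLyapunov δ h) := by
  unfold expLyapunov
  fun_prop

lemma setLIntegral_expLyapunov_ne_top (hδ : 0 ≤ δ) (hbdd : BddBelow (range h)) {s : Set ℝ}
    (hs : ν s ≠ ∞) : ∫⁻ y in s, expLyapunov δ h y ∂ν ≠ ∞ := by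
  obtain ⟨b, hb⟩ := hbdd
  refine (setLIntegral_lt_top_of_le_nnreal hs ⟨(exp (-δ * b)).toNNReal, fun y _ => ?_⟩).ne
  exact ENNReal.ofReal_le_ofReal (exp_le_exp.2
    (mul_le_mul_of_nonpos_left (hb (mem_range_self y)) (neg_nonpos.2 hδ)))

lemma tendsto_expLyapunov_atTop (hδ : 0 < δ) (hh : Tendsto h atTop atTop) :
    Tendsto (expLyapunov δ h) atTop (𝓝 0) := by
  have : Tendsto (fun y => exp (-δ * h y)) atTop (𝓝 0) :=
    tendsto_exp_atBot.comp (hh.const_mul_atTop_of_neg (neg_neg_of_pos hδ))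
  simpa only [ENNReal.ofReal_zero] using! ENNReal.tendsto_ofReal this

lemma tendsto_atTop_of_sub_self {l : ℝ} (hlim : Tendsto (fun y => h y - y) atTop (𝓝 l)) :
    Tendsto h atTop atTop := by
  simpa only [sub_add_cancel, id] using hlim.add_atTop tendsto_id

-- As `h w = w + o(1)`, the one-step increment `h (z + h y) - h y` is `z + o(1)`.
lemma tendsto_ofReal_exp_neg_mul_increment (hlim : Tendsto (fun y => h y - y) atTop (𝓝 0)) (z : ℝ) :
    Tendsto (fun y => ENNReal.ofReal (exp (-δ * (h (z + h y) - h y)))) atTop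
      (𝓝 (ENNReal.ofReal (exp (-δ * z)))) := by
  have hstep : Tendsto (fun y => h (z + h y) - h y) atTop (𝓝 z) := by
    have hcomp := hlim.comp (tendsto_atTop_add_const_left _ z (tendsto_atTop_of_sub_self hlim))
    have hadd := hcomp.add_const z
    rw [zero_add] at hadd
    exact hadd.congr fun y => by simp only [Function.comp_apply]; ring
  exact ENNReal.tendsto_ofReal ((continuous_exp.tendsto _).comp (hstep.const_mul (-δ)))

lemma expLyapunov_eq_ofReal_exp_mul (w y : ℝ) :
    expLyapunov δ h w = ENNReal.ofReal (exp (-δ * (h w - h y))) * expLyapunov δ h y := by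
  rw [expLyapunov, expLyapunov, ← ENNReal.ofReal_mul (exp_pos _).le, ← exp_add]
  ring_nf

lemma exists_eventually_drift_expLyapunov [SFinite m] (hh : Measurable h)
    (hlim : Tendsto (fun y => h y - y) atTop (𝓝 0))
    (hexp : 1 < ∫⁻ z, ENNReal.ofReal (exp (-δ * z)) ∂m) :
    ∃ c : ℝ≥0, c ≠ 0 ∧ ∀ᶠ y in atTop,
      (1 + c) * expLyapunov δ h y ≤ ∫⁻ z, expLyapunov δ h z ∂perturbedWalk m h y := by
  obtain ⟨c, hc, hcexp⟩ := ENNReal.lt_iff_exists_add_pos_lt.1 hexp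
  have hfatou : 1 + c < liminf
      (fun y => ∫⁻ z, ENNReal.ofReal (exp (-δ * (h (z + h y) - h y))) ∂m) atTop := by
    refine hcexp.trans_le (le_trans (le_of_eq ?_) (lintegral_liminf_le fun y => by fun_prop))
    exact lintegral_congr fun z => (tendsto_ofReal_exp_neg_mul_increment hlim z).liminf_eq.symm
  refine ⟨c, hc.ne', (eventually_lt_of_lt_liminf hfatou).mono fun y hy => ?_⟩
  calc (1 + c) * expLyapunov δ h y
      ≤ (∫⁻ z, ENNReal.ofReal (exp (-δ * (h (z + h y) - h y))) ∂m) * expLyapunov δ h y := by gcongr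
    _ = ∫⁻ z, expLyapunov δ h (z + h y) ∂m := by
      rw [← lintegral_mul_const _ (by fun_prop)]
      exact lintegral_congr fun z => (expLyapunov_eq_ofReal_exp_mul _ _).symm
    _ = ∫⁻ z, expLyapunov δ h z ∂perturbedWalk m h y :=
      (lintegral_perturbedWalk hh (measurable_expLyapunov hh) y).symm

lemma lintegral_expLyapunov_tsub_ne_top (hδ : 0 < δ) (hh : Tendsto h atTop atTop)
    (hbdd : BddBelow (range h)) (hfin : ∀ x, ν (Iic x) < ∞) {ε : ℝ≥0∞} (hε : ε ≠ 0) :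
    ∫⁻ y, (expLyapunov δ h y - ε) ∂ν ≠ ∞ := by
  obtain ⟨K, hK⟩ := eventually_atTop.1
    ((tendsto_expLyapunov_atTop hδ hh).eventually_le_const (pos_iff_ne_zero.2 hε))
  have hsupport : Function.support (fun y => expLyapunov δ h y - ε) ⊆ Iic K := fun y hy => by
    by_contra hyK
    exact hy (tsub_eq_zero_of_le (hK y (not_le.1 hyK).le))
  rw [← setLIntegral_eq_of_support_subset hsupport]
  exact ne_top_of_le_ne_top (setLIntegral_expLyapunov_ne_top hδ.le hbdd (hfin K).ne)
    (lintegral_mono fun y => tsub_le_self)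

theorem lintegral_expLyapunov_ne_top [IsProbabilityMeasure m] (hh : Measurable h)
    (hbdd : BddBelow (range h)) (hlim : Tendsto (fun y => h y - y) atTop (𝓝 0)) (hδ : 0 < δ)
    (hexp : 1 < ∫⁻ z, ENNReal.ofReal (exp (-δ * z)) ∂m)
    (hinv : (perturbedWalk m h).Invariant ν) (hfin : ∀ x, ν (Iic x) < ∞) :
    ∫⁻ y, expLyapunov δ h y ∂ν ≠ ∞ := by
  have := isMarkovKernel_perturbedWalk (m := m) hh
  obtain ⟨c, hc, hdrift⟩ := exists_eventually_drift_expLyapunov hh hlim hexp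
  obtain ⟨K, hK⟩ := eventually_atTop.1 hdrift
  exact lintegral_ne_top_of_drift hinv (measurable_expLyapunov hh) measurableSet_Iio
    (setLIntegral_expLyapunov_ne_top hδ.le hbdd
      ((measure_mono Iio_subset_Iic_self).trans_lt (hfin K)).ne)
    (fun ε hε => lintegral_expLyapunov_tsub_ne_top hδ (tendsto_atTop_of_sub_self hlim) hbdd hfin hε)
    hc fun y hy => hK y (not_lt.1 hy)

lemma measure_Iic_le_mul_lintegral_expLyapunov [SFinite m] (hh : Measurable h)
    (hinv : (perturbedWalk m h).Invariant ν) {C x : ℝ}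
    (htail : ∀ y, m (Iic (x - h y)) ≤ ENNReal.ofReal (C * exp (δ * (x - h y)))) :
    ν (Iic x) ≤ ENNReal.ofReal (C * exp (δ * x)) * ∫⁻ y, expLyapunov δ h y ∂ν := by
  have hfactor (y : ℝ) : ENNReal.ofReal (C * exp (δ * (x - h y)))
      = ENNReal.ofReal (C * exp (δ * x)) * expLyapunov δ h y := by
    rw [expLyapunov, ← ENNReal.ofReal_mul' (exp_pos _).le, mul_assoc, ← exp_add]
    ring_nf
  calc ν (Iic x) = ∫⁻ y, m (Iic (x - h y)) ∂ν := by
        conv_lhs => rw [← hinv.def, Measure.bind_apply measurableSet_Iic (Kernel.aemeasurable _)]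
        simp only [perturbedWalk_apply_Iic hh]
    _ ≤ ∫⁻ y, ENNReal.ofReal (C * exp (δ * x)) * expLyapunov δ h y ∂ν :=
        lintegral_mono fun y => (htail y).trans_eq (hfactor y)
    _ = ENNReal.ofReal (C * exp (δ * x)) * ∫⁻ y, expLyapunov δ h y ∂ν :=
        lintegral_const_mul _ (measurable_expLyapunov hh)

theorem isBigO_measureReal_Iic_of_invariant [IsProbabilityMeasure m] (hh : Measurable h)
    (hbdd : BddBelow (range h)) (hlim : Tendsto (fun y => h y - y) atTop (𝓝 0)) (hδ : 0 < δ)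
    (hexp : 1 < ∫⁻ z, ENNReal.ofReal (exp (-δ * z)) ∂m)
    (htail : (fun x => m.real (Iic x)) =O[atBot] fun x => exp (δ * x))
    (hinv : (perturbedWalk m h).Invariant ν) (hfin : ∀ x, ν (Iic x) < ∞) :
    (fun x => ν.real (Iic x)) =O[atBot] fun x => exp (δ * x) := by
  have hφ := lintegral_expLyapunov_ne_top hh hbdd hlim hδ hexp hinv hfin
  obtain ⟨C, hC, hCtail⟩ := htail.exists_pos
  obtain ⟨a, ha⟩ := eventually_atBot.1 hCtail.bound
  obtain ⟨b, hb⟩ := hbdd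
  refine .of_bound (C * (∫⁻ y, expLyapunov δ h y ∂ν).toReal)
    ((eventually_le_atBot (a + b)).mono fun x hx => ?_)
  have hle : ν (Iic x) ≤ ENNReal.ofReal (C * exp (δ * x)) * ∫⁻ y, expLyapunov δ h y ∂ν := by
    refine measure_Iic_le_mul_lintegral_expLyapunov hh hinv fun y => ?_
    rw [ENNReal.le_ofReal_iff_toReal_le (measure_ne_top _ _) (by positivity), ← measureReal_def]
    have hxa : x - h y ≤ a := by linarith [hb (mem_range_self y)]
    simpa only [norm_of_nonneg measureReal_nonneg, norm_of_nonneg (exp_pos _).le]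
      using ha (x - h y) hxa
  have hreal := ENNReal.toReal_mono (by finiteness) hle
  rw [ENNReal.toReal_mul, ENNReal.toReal_ofReal (by positivity)] at hreal
  rw [norm_of_nonneg measureReal_nonneg, norm_of_nonneg (exp_pos _).le]
  exact hreal.trans_eq (by ring)

end PerturbedWalk

section SoftplusDrift

lemma measurable_hY : Measurable hY := by
  unfold hY
  fun_prop

lemma hY_eq_log_one_add_exp (y : ℝ) : hY y = log (1 + exp y) := by
  have hfactor : 1 + exp y = exp y * (1 + exp (-y)) := by
    rw [mul_add, ← exp_add, add_neg_cancel, exp_zero, mul_one, add_comm]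
  rw [hY, hfactor, log_mul (by positivity) (by positivity), log_exp]

lemma bddBelow_range_hY : BddBelow (range hY) := by
  refine ⟨0, forall_mem_range.2 fun y => ?_⟩
  rw [hY_eq_log_one_add_exp]
  exact log_nonneg (by linarith [exp_pos y])

lemma tendsto_hY_sub_self : Tendsto (fun y => hY y - y) atTop (𝓝 0) := by
  have harg : Tendsto (fun y : ℝ => 1 + exp (-y)) atTop (𝓝 1) := by
    simpa only [add_zero] using tendsto_exp_neg_atTop_nhds_zero.const_add 1
  simpa only [hY, add_sub_cancel_left, log_one, Function.comp_def] using
    (continuousAt_log one_ne_zero).tendsto.comp harg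

end SoftplusDrift

section Density

/-- The law on `ℝ` with density `ζ`, the increment law of the chain `Y`. -/
noncomputable def densityLaw (ζ : ℝ → ℝ) : Measure ℝ :=
  volume.withDensity fun z => ENNReal.ofReal (ζ z)

variable {ζ : ℝ → ℝ} {δ : ℝ}

lemma densityLaw_apply (hζnn : ∀ x, 0 ≤ ζ x) (hζint : Integrable ζ) {s : Set ℝ}
    (hs : MeasurableSet s) : densityLaw ζ s = ENNReal.ofReal (∫ y in s, ζ y) := by
  rw [densityLaw, withDensity_apply _ hs,
    ofReal_integral_eq_lintegral_ofReal hζint.integrableOn (Eventually.of_forall hζnn)]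

lemma densityLaw_singleton (x : ℝ) : densityLaw ζ {x} = 0 :=
  withDensity_absolutelyContinuous _ _ (measure_singleton x)

lemma isProbabilityMeasure_densityLaw (hζnn : ∀ x, 0 ≤ ζ x) (hζprob : ∫ x, ζ x = 1) :
    IsProbabilityMeasure (densityLaw ζ) := by
  constructor
  rw [densityLaw_apply hζnn (integrable_of_integral_eq_one hζprob) .univ, setIntegral_univ,
    hζprob, ENNReal.ofReal_one]

lemma integrable_id_densityLaw_iff (hζmeas : Measurable ζ) (hζnn : ∀ x, 0 ≤ ζ x) :
    Integrable (fun z => z) (densityLaw ζ) ↔ Integrable fun x => x * ζ x := by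
  rw [densityLaw, integrable_withDensity_iff (by fun_prop) (by simp)]
  simp only [ENNReal.toReal_ofReal (hζnn _)]

lemma integral_id_densityLaw (hζmeas : Measurable ζ) (hζnn : ∀ x, 0 ≤ ζ x) :
    ∫ z, z ∂densityLaw ζ = ∫ x, x * ζ x := by
  rw [densityLaw, integral_withDensity_eq_integral_toReal_smul (by fun_prop) (by simp)]
  simp only [ENNReal.toReal_ofReal (hζnn _), smul_eq_mul, mul_comm]

lemma IsInvariantY.invariant_perturbedWalk {ν : Measure ℝ} (hinv : IsInvariantY ζ ν)
    (hζmeas : Measurable ζ) [SFinite (densityLaw ζ)] :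
    (perturbedWalk (densityLaw ζ) hY).Invariant ν := by
  refine Measure.ext fun s hs => ?_
  have hind : Measurable (s.indicator (1 : ℝ → ℝ≥0∞)) := measurable_one.indicator hs
  rw [Measure.bind_apply hs (Kernel.aemeasurable _), ← lintegral_indicator_one hs, hinv _ hind]
  refine lintegral_congr fun y => ?_
  have hshift : Measurable fun z => s.indicator (1 : ℝ → ℝ≥0∞) (z + hY y) := by fun_prop
  rw [← lintegral_indicator_one hs, lintegral_perturbedWalk measurable_hY hind, densityLaw,
    lintegral_withDensity_eq_lintegral_mul _ (by fun_prop) hshift]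
  simp only [Pi.mul_apply, mul_comm]

lemma integrable_mul_density_of_exp_tail {C : ℝ} (hζmeas : Measurable ζ) (hζnn : ∀ x, 0 ≤ ζ x)
    (hζint : Integrable ζ) (hδ : 0 < δ)
    (htail : ∀ x : ℝ, 0 ≤ x → ∫ y in {y : ℝ | x < |y|}, ζ y ≤ C * exp (-δ * x)) :
    Integrable fun x => x * ζ x := by
  refine (integrable_id_densityLaw_iff hζmeas hζnn).1
    (integrable_id_of_exp_tail (C := C) hδ fun x hx => ?_)
  rw [densityLaw_apply hζnn hζint (measurableSet_lt measurable_const measurable_abs)]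
  exact ENNReal.ofReal_le_ofReal (htail x hx)

lemma isBigO_setIntegral_Iic_of_exp_tail {C : ℝ} (hζnn : ∀ x, 0 ≤ ζ x) (hζint : Integrable ζ)
    (htail : ∀ x : ℝ, 0 ≤ x → ∫ y in {y : ℝ | x < |y|}, ζ y ≤ C * exp (-δ * x)) :
    (fun x => ∫ y in Iic x, ζ y) =O[atBot] fun x => exp (δ * x) := by
  refine .of_bound C ((eventually_le_atBot 0).mono fun x hx => ?_)
  have hsub : Iio x ⊆ {y | -x < |y|} := fun y hy => (neg_lt_neg hy).trans_le (neg_le_abs y)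
  rw [norm_of_nonneg (integral_nonneg hζnn), norm_of_nonneg (exp_pos _).le]
  calc ∫ y in Iic x, ζ y = ∫ y in Iio x, ζ y := integral_Iic_eq_integral_Iio
    _ ≤ ∫ y in {y | -x < |y|}, ζ y :=
      setIntegral_mono_set hζint.integrableOn (Eventually.of_forall hζnn) hsub.eventuallyLE
    _ ≤ C * exp (δ * x) := by simpa only [neg_mul_neg] using htail (-x) (neg_nonneg.2 hx)

end Density

lemma isBigO_exp_mul_atBot {a b : ℝ} (hab : a ≤ b) :
    (fun x => exp (b * x)) =O[atBot] fun x => exp (a * x) := by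
  refine .of_bound 1 ((eventually_le_atBot 0).mono fun x hx => ?_)
  rw [norm_of_nonneg (exp_pos _).le, norm_of_nonneg (exp_pos _).le, one_mul]
  exact exp_le_exp.2 (mul_le_mul_of_nonpos_right hab hx)

theorem stmt8_general {ζ : ℝ → ℝ} (hζmeas : Measurable ζ) (hζnn : ∀ x, 0 ≤ ζ x)
    (hζprob : ∫ x, ζ x = 1) (hint : Integrable fun x => x * ζ x) (hmean : ∫ x, x * ζ x ≤ 0)
    {δ : ℝ} (hδ : 0 < δ) (htail : (fun x => ∫ y in Iic x, ζ y) =O[atBot] fun x => exp (δ * x))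
    {ν : Measure ℝ} (hinv : IsInvariantY ζ ν) (hfin : ∀ x, ν (Iic x) < ∞) :
    (fun x => ν.real (Iic x)) =O[atBot] fun x => exp (δ * x) := by
  have := isProbabilityMeasure_densityLaw hζnn hζprob
  have hne : densityLaw ζ {0}ᶜ ≠ 0 := by
    simp [prob_compl_eq_one_sub, densityLaw_singleton]
  have hexp : 1 < ∫⁻ z, ENNReal.ofReal (exp (-δ * z)) ∂densityLaw ζ :=
    one_lt_lintegral_exp_neg_mul ((integrable_id_densityLaw_iff hζmeas hζnn).2 hint)
      ((integral_id_densityLaw hζmeas hζnn).trans_le hmean) hne hδ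
  refine isBigO_measureReal_Iic_of_invariant measurable_hY bddBelow_range_hY tendsto_hY_sub_self hδ
    hexp (htail.congr_left fun x => ?_) (hinv.invariant_perturbedWalk hζmeas) hfin
  rw [measureReal_def, densityLaw_apply hζnn (integrable_of_integral_eq_one hζprob)
    measurableSet_Iic, ENNReal.toReal_ofReal (integral_nonneg hζnn)]

/-- Proposition: exponential decay at -∞ of the cumulative function of the invariant
measure of the chain Y. -/
theorem stmt8
    (ζ : ℝ → ℝ) (hζmeas : Measurable ζ) (hζnn : ∀ x, 0 ≤ ζ x)
    (hζprob : ∫ x, ζ x = 1)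
    (hmean : ∫ x, x * ζ x = 0)
    (δ : ℝ) (hδ : 0 < δ) (Cδ : ℝ)
    (htail : ∀ x : ℝ, 0 ≤ x → ∫ y in {y : ℝ | x < |y|}, ζ y ≤ Cδ * Real.exp (-δ * x))
    (θ : ℝ) (hθ0 : 0 < θ) (hθ1 : θ ≤ 1) (Cθ : ℝ)
    (hHolder : ∀ x y : ℝ, |ζ x - ζ y| ≤ Cθ * |x - y| ^ θ)
    (ν : Measure ℝ) (hν0 : ν ≠ 0) [SigmaFinite ν]
    (hinv : IsInvariantY ζ ν) (hfin : ∀ x : ℝ, ν (Set.Iic x) < ⊤) (hinfty : ν Set.univ = ⊤)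
    (x₀ : ℝ)
    (hx₀supp : ∃ ε > 0, ∀ u v : ℝ, x₀ - ε ≤ u → u < v → v ≤ x₀ + ε → 0 < ν (Set.Ioo u v))
    (hnorm : (ν (Set.Iic x₀)).toReal = 1)
 :
    ∀ δ' : ℝ, 0 < δ' → δ' < δ →
      ∃ C > 0, ∃ x₁ : ℝ, ∀ x ≤ x₁, (ν (Set.Iic x)).toReal ≤ C * Real.exp (δ' * x) := by
  intro δ' _ hδ'
  have hζint := integrable_of_integral_eq_one hζprob
  obtain ⟨C, hC, hbound⟩ := ((stmt8_general hζmeas hζnn hζprob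
    (integrable_mul_density_of_exp_tail hζmeas hζnn hζint hδ htail) hmean.le hδ
    (isBigO_setIntegral_Iic_of_exp_tail hζnn hζint htail) hinv hfin).trans
    (isBigO_exp_mul_atBot hδ'.le)).exists_pos
  exact ⟨C, hC, eventually_atBot.1 (by simpa [measureReal_def] using hbound.bound)⟩
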